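/- Let μ be a Borel probability measure on Ω absolutely continuous with respect to d-dimensional Lebesgue measure, let ν be a Borel probability measure on Ω, let u0 be a Kantorovich potential and T0 an optimal transport map for W1(μ,ν), let η ≥ 0, and let μ̃ = (I − η∇u0)_#μ be the pushforward of μ under any Borel map equal Lebesgue-almost everywhere to x ↦ x − η∇u0(x). Then W1(μ̃, ν) ≤ W1(μ,ν) − η·(2·μ({x ∈ Ω : |x − T0(x)| ≥ η}) − 1). -/

import Mathlib

open MeasureTheory Set

noncomputable section

/-- The Wasserstein 1 distance between two Borel probability measures, defined as the
infimum of the transport cost over all couplings. -/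
def W1 {d : ℕ} (μ ν : Measure (EuclideanSpace ℝ (Fin d))) : ℝ :=
  sInf {c | ∃ γ : Measure (EuclideanSpace ℝ (Fin d) × EuclideanSpace ℝ (Fin d)),
    IsProbabilityMeasure γ ∧ γ.map Prod.fst = μ ∧ γ.map Prod.snd = ν ∧
    c = ∫ p, ‖p.1 - p.2‖ ∂γ}

/-- `u0` is a Kantorovich potential for `W1(μ, ν)`: it is 1-Lipschitz on Ω and achieves
the supremum in the dual problem. -/
def IsKantorovichPotential {d : ℕ} (Ω : Set (EuclideanSpace ℝ (Fin d)))
    (μ ν : Measure (EuclideanSpace ℝ (Fin d))) (u0 : EuclideanSpace ℝ (Fin d) → ℝ) : Prop :=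
  LipschitzOnWith 1 u0 Ω ∧
  ∀ u : EuclideanSpace ℝ (Fin d) → ℝ, LipschitzOnWith 1 u Ω →
    ∫ x, u x ∂μ - ∫ x, u x ∂ν ≤ ∫ x, u0 x ∂μ - ∫ x, u0 x ∂ν

/-- `T` is an optimal transport map for `W1(μ, ν)`: a Borel map from Ω to Ω pushing μ
forward to ν whose transport cost equals `W1 μ ν`. -/
def IsOptimalMap {d : ℕ} (Ω : Set (EuclideanSpace ℝ (Fin d)))
    (μ ν : Measure (EuclideanSpace ℝ (Fin d)))
    (T : EuclideanSpace ℝ (Fin d) → EuclideanSpace ℝ (Fin d)) : Prop :=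
  Measurable T ∧ MapsTo T Ω Ω ∧ μ.map T = ν ∧ ∫ x, ‖x - T x‖ ∂μ = W1 μ ν

lemma hb_sublinear {E : Type*} [AddCommGroup E] [Module ℝ E] (N : E → ℝ)
    (N_hom : ∀ c : ℝ, 0 < c → ∀ x, N (c • x) = c * N x)
    (N_add : ∀ x y, N (x + y) ≤ N x + N y) (x₀ : E) :
    ∃ g : E →ₗ[ℝ] ℝ, g x₀ = N x₀ ∧ ∀ x, g x ≤ N x := by
  have N_0 : N 0 = 0 := by
    have := N_hom 2 (by norm_num) 0
    rw [smul_zero] at this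
    linarith
  have H : ∀ c : ℝ, c • x₀ = 0 → c • N x₀ = 0 := by
    intro c hc
    rcases smul_eq_zero.1 hc with h | h
    · simp [h]
    · simp [h, N_0]
  obtain ⟨g, hg, hgN⟩ := exists_extension_of_le_sublinear
    (LinearPMap.mkSpanSingleton' x₀ (N x₀) H) N N_hom N_add (by
      rintro ⟨x, hx⟩
      obtain ⟨t, rfl⟩ := Submodule.mem_span_singleton.1 hx
      rw [LinearPMap.mkSpanSingleton'_apply]
      simp only [smul_eq_mul, RingHom.id_apply]
      rcases lt_trichotomy t 0 with ht | ht | ht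
      · have h1 := N_add (t • x₀) ((-t) • x₀)
        rw [← add_smul, N_hom (-t) (by linarith)] at h1
        simp [N_0] at h1
        linarith
      · simp [ht, N_0]
      · rw [N_hom t ht])
  refine ⟨g, ?_, hgN⟩
  have := hg ⟨x₀, Submodule.mem_span_singleton_self x₀⟩
  simp only at this
  rw [this]
  have h2 := LinearPMap.mkSpanSingleton'_apply (σ := RingHom.id ℝ) x₀ (N x₀) H (1 : ℝ)
    (by rw [one_smul]; exact Submodule.mem_span_singleton_self x₀)
  simpa using h2

section
variable {K : Type*} [MetricSpace K] [CompactSpace K] [SecondCountableTopology K]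
  [MeasurableSpace K] [BorelSpace K]

lemma integrable_cpt (μ : Measure K) [IsProbabilityMeasure μ] (φ : C(K, ℝ)) :
    Integrable φ μ := by
  exact φ.continuous.integrable_of_hasCompactSupport (HasCompactSupport.of_compactSpace _)

lemma dual_lower (μ ν : Measure K) [IsProbabilityMeasure μ] [IsProbabilityMeasure ν]
    (φ ψ : C(K, ℝ)) (c : ℝ) (h : ∀ x y, c ≤ φ x + ψ y) :
    c ≤ ∫ x, φ x ∂μ + ∫ y, ψ y ∂ν := by
  have h1 : ∀ y, c - ψ y ≤ ∫ x, φ x ∂μ := by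
    intro y
    have := integral_mono (μ := μ) (integrable_const (c - ψ y)) (integrable_cpt μ φ)
      (fun x => by have := h x y; simp only; linarith)
    simpa using this
  have := integral_mono (μ := ν) (integrable_const (c - ∫ x, φ x ∂μ)) (integrable_cpt ν ψ)
      (fun y => by have := h1 y; simp only; linarith)
  simp at this
  linarith

open CompactlySupported

def dualSet (μ ν : Measure K) (h : C_c(K × K, ℝ)) : Set ℝ :=
  {r | ∃ φ ψ : C(K, ℝ), (∀ x y, h (x, y) ≤ φ x + ψ y) ∧ r = ∫ x, φ x ∂μ + ∫ y, ψ y ∂ν}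

variable (μ ν : Measure K) [IsProbabilityMeasure μ] [IsProbabilityMeasure ν]

lemma dualSet_bdd (h : C_c(K × K, ℝ)) : BddBelow (dualSet μ ν h) := by
  obtain ⟨C, hC⟩ := (isCompact_univ.image h.continuous).bddBelow
  refine ⟨C, ?_⟩
  rintro r ⟨φ, ψ, hh, rfl⟩
  exact dual_lower μ ν φ ψ C fun x y => (hC ⟨(x, y), trivial, rfl⟩).trans (hh x y)

lemma dualSet_ne (h : C_c(K × K, ℝ)) : (dualSet μ ν h).Nonempty := by
  obtain ⟨C, hC⟩ := (isCompact_univ.image h.continuous).bddAbove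
  exact ⟨_, ContinuousMap.const K C, ContinuousMap.const K 0,
    fun x y => by simpa using hC ⟨(x, y), trivial, rfl⟩, rfl⟩

lemma dualSet_smul (h : C_c(K × K, ℝ)) (c : ℝ) (hc : 0 < c) {r : ℝ}
    (hr : r ∈ dualSet μ ν h) : c * r ∈ dualSet μ ν (c • h) := by
  obtain ⟨φ, ψ, hh, rfl⟩ := hr
  refine ⟨c • φ, c • ψ, fun x y => ?_, ?_⟩
  · have := mul_le_mul_of_nonneg_left (hh x y) hc.le
    simp
    linarith
  · simp [integral_const_mul, mul_add]

lemma dual_sInf_smul_le (h : C_c(K × K, ℝ)) (c : ℝ) (hc : 0 < c) :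
    sInf (dualSet μ ν (c • h)) ≤ c * sInf (dualSet μ ν h) := by
  rw [← div_le_iff₀' hc]
  refine le_csInf (dualSet_ne μ ν h) fun r hr => ?_
  rw [div_le_iff₀' hc]
  exact csInf_le (dualSet_bdd μ ν _) (dualSet_smul μ ν h c hc hr)

lemma kantorovich_aux : ∃ γ : Measure (K × K), IsProbabilityMeasure γ ∧ γ.map Prod.fst = μ ∧
    γ.map Prod.snd = ν ∧ ∀ ε : ℝ, 0 < ε → ∃ φ ψ : C(K, ℝ), (∀ x y, - dist x y ≤ φ x + ψ y) ∧
      ∫ x, φ x ∂μ + ∫ y, ψ y ∂ν < - ∫ p, dist p.1 p.2 ∂γ + ε := by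
  let h0 : C_c(K × K, ℝ) := ⟨⟨fun p => - dist p.1 p.2, by fun_prop⟩,
    HasCompactSupport.of_compactSpace _⟩
  obtain ⟨g, hg0, hg⟩ := hb_sublinear (fun h => sInf (dualSet μ ν h)) (by
      intro c hc h
      refine le_antisymm (dual_sInf_smul_le μ ν h c hc) ?_
      have := dual_sInf_smul_le μ ν (c • h) c⁻¹ (inv_pos.2 hc)
      rw [smul_smul, inv_mul_cancel₀ hc.ne', one_smul] at this
      rwa [← div_eq_inv_mul, le_div_iff₀' hc] at this) (by
      intro h k
      rw [← csInf_add (dualSet_ne μ ν h) (dualSet_bdd μ ν h) (dualSet_ne μ ν k)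
        (dualSet_bdd μ ν k)]
      refine csInf_le_csInf (dualSet_bdd μ ν _)
        ((dualSet_ne μ ν h).add (dualSet_ne μ ν k)) ?_
      rintro _ ⟨_, ⟨φ, ψ, hh, rfl⟩, _, ⟨φ', ψ', hh', rfl⟩, rfl⟩
      refine ⟨φ + φ', ψ + ψ', fun x y => ?_, ?_⟩
      · have := hh x y
        have := hh' x y
        simp
        linarith
      · simp only [ContinuousMap.add_apply]
        rw [integral_add (integrable_cpt μ φ) (integrable_cpt μ φ'),
          integral_add (integrable_cpt ν ψ) (integrable_cpt ν ψ')]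
        ring) h0
  have hle : ∀ (h : C_c(K × K, ℝ)) (φ ψ : C(K, ℝ)), (∀ x y, h (x, y) ≤ φ x + ψ y) →
      g h ≤ ∫ x, φ x ∂μ + ∫ y, ψ y ∂ν := fun h φ ψ hh =>
    (hg h).trans (csInf_le (dualSet_bdd μ ν h) ⟨φ, ψ, hh, rfl⟩)
  have heq : ∀ (h : C_c(K × K, ℝ)) (φ ψ : C(K, ℝ)), (∀ x y, h (x, y) = φ x + ψ y) →
      g h = ∫ x, φ x ∂μ + ∫ y, ψ y ∂ν := by
    intro h φ ψ hh
    refine le_antisymm (hle h φ ψ fun x y => (hh x y).le) ?_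
    have := hle (-h) (-φ) (-ψ) (fun x y => by simp [hh])
    simp [integral_neg] at this
    linarith
  let Λ : C_c(K × K, ℝ) →ₚ[ℝ] ℝ := PositiveLinearMap.mk₀ g (by
    intro h hh
    have := hle (-h) 0 0 (fun x y => by
      have : (0 : ℝ) ≤ h (x, y) := hh (x, y)
      simpa using this)
    simp at this
    exact this)
  have hΛ : ∀ h, ∫ p, h p ∂(RealRMK.rieszMeasure Λ) = g h := fun h =>
    RealRMK.integral_rieszMeasure Λ h
  have hfst : (RealRMK.rieszMeasure Λ).map Prod.fst = μ := by
    refine ext_of_forall_integral_eq_of_IsFiniteMeasure fun φ => ?_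
    rw [integral_map (by fun_prop) φ.continuous.aestronglyMeasurable]
    have := hΛ ⟨⟨fun p => φ p.1, by fun_prop⟩, HasCompactSupport.of_compactSpace _⟩
    rw [heq _ φ.toContinuousMap 0 (fun x y => by simp)] at this
    simpa using this
  have hsnd : (RealRMK.rieszMeasure Λ).map Prod.snd = ν := by
    refine ext_of_forall_integral_eq_of_IsFiniteMeasure fun φ => ?_
    rw [integral_map (by fun_prop) φ.continuous.aestronglyMeasurable]
    have := hΛ ⟨⟨fun p => φ p.2, by fun_prop⟩, HasCompactSupport.of_compactSpace _⟩
    rw [heq _ 0 φ.toContinuousMap (fun x y => by simp)] at this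
    simpa using this
  refine ⟨RealRMK.rieszMeasure Λ, ?_, hfst, hsnd, ?_⟩
  · constructor
    have : (RealRMK.rieszMeasure Λ).map Prod.fst univ = 1 := by rw [hfst]; simp
    rwa [Measure.map_apply measurable_fst MeasurableSet.univ, preimage_univ] at this
  · intro ε hε
    have h1 : ∫ p, - dist p.1 p.2 ∂(RealRMK.rieszMeasure Λ) = sInf (dualSet μ ν h0) :=
      (hΛ h0).trans hg0
    rw [integral_neg] at h1
    obtain ⟨_, ⟨φ, ψ, hh, rfl⟩, hlt⟩ := Real.lt_sInf_add_pos (dualSet_ne μ ν h0) hε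
    exact ⟨φ, ψ, hh, by rw [h1]; exact hlt⟩

lemma kantorovich_dual : ∃ γ : Measure (K × K), IsProbabilityMeasure γ ∧ γ.map Prod.fst = μ ∧
    γ.map Prod.snd = ν ∧ ∀ ε : ℝ, 0 < ε → ∃ u : K → ℝ, LipschitzWith 1 u ∧
      ∫ p, dist p.1 p.2 ∂γ - ε ≤ ∫ x, u x ∂μ - ∫ y, u y ∂ν := by
  obtain ⟨γ, h1, h2, h3, h4⟩ := kantorovich_aux μ ν
  refine ⟨γ, h1, h2, h3, fun ε hε => ?_⟩
  obtain ⟨φ, ψ, hh, hlt⟩ := h4 ε hε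
  have : Nonempty K := μ.nonempty_of_neZero
  have hbd : ∀ x, BddBelow (range fun y => dist x y + ψ y) := by
    intro x
    refine ⟨- φ x, ?_⟩
    rintro _ ⟨y, rfl⟩
    have := hh x y
    simp only
    linarith
  let u : K → ℝ := fun x => ⨅ y, (dist x y + ψ y)
  have hu : LipschitzWith 1 u := by
    refine LipschitzWith.of_le_add fun x x' => ?_
    rw [← sub_le_iff_le_add]
    refine le_ciInf fun y => ?_
    have a := ciInf_le (hbd x) y
    have b := dist_triangle x x' y
    simp only [u]
    linarith
  have hui : ∀ (m : Measure K) [IsProbabilityMeasure m], Integrable u m := fun m _ =>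
    integrable_cpt m ⟨u, hu.continuous⟩
  refine ⟨u, hu, ?_⟩
  have a : - ∫ x, φ x ∂μ ≤ ∫ x, u x ∂μ := by
    rw [← integral_neg]
    refine integral_mono (integrable_cpt μ φ).neg (hui μ) fun x => ?_
    refine le_ciInf fun y => ?_
    have := hh x y
    simp only
    linarith
  have b : ∫ y, u y ∂ν ≤ ∫ y, ψ y ∂ν := by
    refine integral_mono (hui ν) (integrable_cpt ν ψ) fun y => ?_
    have := ciInf_le (hbd y) y
    simpa using this
  linarith
end

lemma W1_bdd {d : ℕ} (μ ν : Measure (EuclideanSpace ℝ (Fin d))) :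
    BddBelow {c | ∃ γ : Measure (EuclideanSpace ℝ (Fin d) × EuclideanSpace ℝ (Fin d)),
    IsProbabilityMeasure γ ∧ γ.map Prod.fst = μ ∧ γ.map Prod.snd = ν ∧
    c = ∫ p, ‖p.1 - p.2‖ ∂γ} := by
  refine ⟨0, ?_⟩
  rintro _ ⟨γ, -, -, -, rfl⟩
  exact integral_nonneg fun p => norm_nonneg _

lemma W1_le_dual {d : ℕ} (Ω : Set (EuclideanSpace ℝ (Fin d)))
    (hΩc : IsCompact Ω)
    (μ ν : Measure (EuclideanSpace ℝ (Fin d)))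
    [IsProbabilityMeasure μ] [IsProbabilityMeasure ν]
    (hμΩ : μ Ωᶜ = 0) (hνΩ : ν Ωᶜ = 0)
    (u0 : EuclideanSpace ℝ (Fin d) → ℝ) (hu0 : IsKantorovichPotential Ω μ ν u0) :
    W1 μ ν ≤ ∫ x, u0 x ∂μ - ∫ x, u0 x ∂ν := by
  have hm := hΩc.measurableSet
  have : CompactSpace Ω := isCompact_iff_compactSpace.1 hΩc
  have key : ∀ m : Measure (EuclideanSpace ℝ (Fin d)), IsProbabilityMeasure m → m Ωᶜ = 0 →
      (m.comap ((↑) : Ω → EuclideanSpace ℝ (Fin d))).map Subtype.val = m := by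
    intro m _ h
    rw [map_comap_subtype_coe hm, Measure.restrict_eq_self_of_ae_mem]
    exact h
  have keyP : ∀ m : Measure (EuclideanSpace ℝ (Fin d)), IsProbabilityMeasure m → m Ωᶜ = 0 →
      IsProbabilityMeasure (m.comap ((↑) : Ω → EuclideanSpace ℝ (Fin d))) := by
    intro m hmp h
    have h1 := key m hmp h
    constructor
    have h2 : (m.comap ((↑) : Ω → EuclideanSpace ℝ (Fin d))).map Subtype.val univ = 1 := by
      rw [h1]; simp
    rwa [Measure.map_apply measurable_subtype_coe MeasurableSet.univ, preimage_univ] at h2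
  have := keyP μ inferInstance hμΩ
  have := keyP ν inferInstance hνΩ
  obtain ⟨γ, hγ, h1, h2, h3⟩ := kantorovich_dual
    (μ.comap ((↑) : Ω → EuclideanSpace ℝ (Fin d))) (ν.comap ((↑) : Ω → EuclideanSpace ℝ (Fin d)))
  have hW : W1 μ ν ≤ ∫ p, dist p.1 p.2 ∂γ := by
    refine csInf_le (W1_bdd μ ν)
      ⟨γ.map (fun p => ((p.1 : EuclideanSpace ℝ (Fin d)), (p.2 : EuclideanSpace ℝ (Fin d)))),
      Measure.isProbabilityMeasure_map (by fun_prop), ?_, ?_, ?_⟩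
    · rw [Measure.map_map (by fun_prop) (by fun_prop)]
      conv_rhs => rw [← key μ inferInstance hμΩ, ← h1,
        Measure.map_map measurable_subtype_coe (by fun_prop)]
      rfl
    · rw [Measure.map_map (by fun_prop) (by fun_prop)]
      conv_rhs => rw [← key ν inferInstance hνΩ, ← h2,
        Measure.map_map measurable_subtype_coe (by fun_prop)]
      rfl
    · rw [integral_map (by fun_prop) (by fun_prop)]
      refine integral_congr_ae (Filter.Eventually.of_forall fun p => ?_)
      simp [Subtype.dist_eq, dist_eq_norm]
  refine hW.trans (le_of_forall_pos_le_add fun ε hε => ?_)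
  obtain ⟨u, hu, hle⟩ := h3 ε hε
  obtain ⟨v, hv, hvu⟩ : ∃ v : EuclideanSpace ℝ (Fin d) → ℝ, LipschitzOnWith 1 v Ω ∧
      ∀ x : Ω, v x = u x := by
    classical
    refine ⟨fun x => if h : x ∈ Ω then u ⟨x, h⟩ else 0, ?_, fun x => by simp⟩
    intro x hx y hy
    simp only [hx, hy, dif_pos]
    exact hu ⟨x, hx⟩ ⟨y, hy⟩
  have keyI : ∀ m : Measure (EuclideanSpace ℝ (Fin d)), m Ωᶜ = 0 →
      ∫ x, u x ∂(m.comap ((↑) : Ω → EuclideanSpace ℝ (Fin d))) = ∫ x, v x ∂m := by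
    intro m h
    simp_rw [← hvu]
    rw [integral_subtype_comap hm, Measure.restrict_eq_self_of_ae_mem]
    exact h
  have := hu0.2 v hv
  rw [keyI μ hμΩ, keyI ν hνΩ] at hle
  linarith

lemma grad_eq {d : ℕ} (Ω : Set (EuclideanSpace ℝ (Fin d))) (hΩv : Convex ℝ Ω)
    (u : EuclideanSpace ℝ (Fin d) → ℝ) (hu : LipschitzOnWith 1 u Ω)
    (x y g : EuclideanSpace ℝ (Fin d)) (hx : x ∈ interior Ω) (hy : y ∈ Ω)
    (hg : HasGradientWithinAt u g Ω x) (hxy : ‖x - y‖ ≤ u x - u y) :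
    ‖g‖ ≤ 1 ∧ ‖x - y‖ • g = x - y := by
  have hxΩ := interior_subset hx
  have hn : Ω ∈ nhds x := mem_interior_iff_mem_nhds.1 hx
  have hF := (hg.hasFDerivWithinAt).hasFDerivAt hn
  have hg1 : ‖g‖ ≤ 1 := by
    have := hF.le_of_lipschitzOn hn hu
    simpa using this
  refine ⟨hg1, ?_⟩
  have hl : ∀ a ∈ Ω, ∀ b ∈ Ω, u a - u b ≤ ‖a - b‖ := by
    intro a ha b hb
    have := hu.dist_le_mul a ha b hb
    rw [Real.dist_eq, dist_eq_norm] at this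
    have h2 := le_abs_self (u a - u b)
    simp at this
    linarith
  have hd : HasDerivAt (fun t : ℝ => x + t • (y - x)) (y - x) 0 := by
    have := ((hasDerivAt_id (0 : ℝ)).smul_const (y - x)).const_add x
    simpa using this
  have hc : HasDerivAt (fun t : ℝ => u (x + t • (y - x))) (inner ℝ g (y - x)) 0 := by
    have hF' : HasFDerivAt u (InnerProductSpace.toDual ℝ _ g) (x + (0 : ℝ) • (y - x)) := by
      simpa using hF
    have := hF'.comp_hasDerivAt (0 : ℝ) hd
    rw [InnerProductSpace.toDual_apply_apply] at this
    exact this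
  have hlin : ∀ t ∈ Icc (0 : ℝ) 1, u (x + t • (y - x)) = u x - t * ‖x - y‖ := by
    intro t ht
    have hz : x + t • (y - x) ∈ Ω := hΩv.add_smul_sub_mem hxΩ hy ht
    have a := hl x hxΩ _ hz
    have b := hl _ hz y hy
    have e1 : x - (x + t • (y - x)) = t • (x - y) := by module
    have e2 : x + t • (y - x) - y = (1 - t) • (x - y) := by module
    rw [e1, norm_smul, Real.norm_of_nonneg ht.1] at a
    rw [e2, norm_smul, Real.norm_of_nonneg (by linarith [ht.2])] at b
    linarith
  have hc2 : HasDerivWithinAt (fun t : ℝ => u (x + t • (y - x))) (-‖x - y‖) (Icc 0 1) 0 := by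
    have h : HasDerivAt (fun t : ℝ => u x - t * ‖x - y‖) (-‖x - y‖) 0 := by
      have := ((hasDerivAt_id (0 : ℝ)).mul_const ‖x - y‖).const_sub (u x)
      simpa using this
    exact h.hasDerivWithinAt.congr hlin (hlin 0 (by simp))
  have hin : inner ℝ g (y - x) = -‖x - y‖ :=
    (uniqueDiffOn_Icc (zero_lt_one (α := ℝ)) 0 (by simp)).eq_deriv _ hc.hasDerivWithinAt hc2
  have hin' : inner ℝ g (x - y) = ‖x - y‖ := by
    rw [← neg_sub y x, inner_neg_right, hin, neg_neg, neg_sub]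
  rw [← sub_eq_zero, ← norm_eq_zero]
  have hsq : ‖‖x - y‖ • g - (x - y)‖ ^ 2 ≤ 0 := by
    rw [norm_sub_sq_real, inner_smul_left, hin', norm_smul]
    simp only [norm_norm, conj_trivial]
    have : ‖g‖ ^ 2 ≤ 1 := by nlinarith [norm_nonneg g]
    nlinarith [mul_le_mul_of_nonneg_left this (sq_nonneg ‖x - y‖)]
  exact pow_eq_zero_iff (two_ne_zero) |>.1 (le_antisymm hsq (sq_nonneg _))

theorem stmt12 {d : ℕ} (hd : 1 ≤ d) (Ω : Set (EuclideanSpace ℝ (Fin d)))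
    (hΩc : IsCompact Ω) (hΩv : Convex ℝ Ω)
    (μ ν : Measure (EuclideanSpace ℝ (Fin d)))
    [IsProbabilityMeasure μ] [IsProbabilityMeasure ν]
    (hμΩ : μ Ωᶜ = 0) (hνΩ : ν Ωᶜ = 0) (hac : μ ≪ volume)
    (u0 : EuclideanSpace ℝ (Fin d) → ℝ) (hu0 : IsKantorovichPotential Ω μ ν u0)
    (T0 : EuclideanSpace ℝ (Fin d) → EuclideanSpace ℝ (Fin d))
    (hT0 : IsOptimalMap Ω μ ν T0)
    (η : ℝ) (hη : 0 ≤ η)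
    (f : EuclideanSpace ℝ (Fin d) → EuclideanSpace ℝ (Fin d)) (hf : Measurable f)
    (hfae : ∀ᵐ x ∂(volume.restrict Ω), ∃ g : EuclideanSpace ℝ (Fin d),
      HasGradientWithinAt u0 g Ω x ∧ f x = x - η • g) :
    W1 (μ.map f) ν ≤
      W1 μ ν - η * (2 * (μ {x | x ∈ Ω ∧ η ≤ ‖x - T0 x‖}).toReal - 1) := by
  obtain ⟨hTm, hTΩ, hTν, hTc⟩ := hT0
  have hm := hΩc.measurableSet
  have hdual := W1_le_dual Ω hΩc μ ν hμΩ hνΩ u0 hu0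
  have hxΩ : ∀ᵐ x ∂μ, x ∈ Ω := hμΩ
  have hxint : ∀ᵐ x ∂μ, x ∈ interior Ω := by
    have h1 : ∀ᵐ x ∂μ, x ∉ frontier Ω := by
      have h2 : μ (frontier Ω) = 0 := hac (hΩv.addHaar_frontier volume)
      exact measure_eq_zero_iff_ae_notMem.1 h2
    filter_upwards [h1, hxΩ] with x hx hxo
    by_contra h
    exact hx ⟨subset_closure hxo, h⟩
  have hfμ : ∀ᵐ x ∂μ, ∃ g : EuclideanSpace ℝ (Fin d),
      HasGradientWithinAt u0 g Ω x ∧ f x = x - η • g := by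
    have h1 := hac.ae_le ((ae_restrict_iff' hm).1 hfae)
    filter_upwards [h1, hxΩ] with x h2 h3 using h2 h3
  obtain ⟨v, hv, hvu⟩ := hu0.1.extend_real
  obtain ⟨C, hC⟩ := hΩc.isBounded.exists_norm_le
  obtain ⟨D, hD⟩ := (hΩc.image hv.continuous).isBounded.exists_norm_le
  have hI1 : Integrable (fun x => ‖x - T0 x‖) μ := by
    refine Integrable.of_bound (C := C + C) (by fun_prop) ?_
    filter_upwards [hxΩ] with x hx
    rw [norm_norm]
    exact (norm_sub_le _ _).trans (add_le_add (hC _ hx) (hC _ (hTΩ hx)))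
  have hI2 : Integrable v μ := by
    refine Integrable.of_bound (C := D) hv.continuous.aestronglyMeasurable ?_
    filter_upwards [hxΩ] with x hx
    exact hD _ ⟨x, hx, rfl⟩
  have hI3 : Integrable (fun x => v (T0 x)) μ := by
    refine Integrable.of_bound (C := D) (hv.continuous.measurable.comp hTm).aestronglyMeasurable ?_
    filter_upwards [hxΩ] with x hx
    exact hD _ ⟨T0 x, hTΩ hx, rfl⟩
  have e1 : ∫ x, u0 x ∂μ = ∫ x, v x ∂μ := by
    refine integral_congr_ae ?_
    filter_upwards [hxΩ] with x hx using hvu hx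
  have e2 : ∫ x, u0 x ∂ν = ∫ x, v (T0 x) ∂μ := by
    rw [← integral_map (f := v) hTm.aemeasurable hv.continuous.aestronglyMeasurable, hTν]
    refine integral_congr_ae ?_
    have hxν : ∀ᵐ x ∂ν, x ∈ Ω := hνΩ
    filter_upwards [hxν] with x hx using hvu hx
  have hnn : ∀ x, 0 ≤ ‖x - T0 x‖ - (v x - v (T0 x)) := by
    intro x
    have h1 := hv.dist_le_mul x (T0 x)
    rw [Real.dist_eq, dist_eq_norm] at h1
    have h2 := le_abs_self (v x - v (T0 x))
    simp at h1
    linarith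
  have hz : ∫ x, (‖x - T0 x‖ - (v x - v (T0 x))) ∂μ = 0 := by
    refine le_antisymm ?_ (integral_nonneg hnn)
    have hI23 : Integrable (fun x => v x - v (T0 x)) μ := hI2.sub hI3
    rw [integral_sub hI1 hI23, integral_sub hI2 hI3, hTc, ← e1, ← e2]
    linarith
  rw [integral_eq_zero_iff_of_nonneg hnn (hI1.sub (hI2.sub hI3))] at hz
  set A : Set (EuclideanSpace ℝ (Fin d)) := {x | x ∈ Ω ∧ η ≤ ‖x - T0 x‖} with hA
  have hAm : MeasurableSet A :=
    hm.inter (measurableSet_le measurable_const (measurable_id.sub hTm).norm)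
  have hbound : ∀ᵐ x ∂μ, ‖f x - T0 x‖ ≤ ‖x - T0 x‖ + η - A.indicator (fun _ => 2 * η) x := by
    filter_upwards [hxint, hfμ, hz] with x hx hg hzx
    obtain ⟨g, hg, hfx⟩ := hg
    have hxo := interior_subset hx
    simp only [Pi.zero_apply] at hzx
    rw [← hvu hxo, ← hvu (hTΩ hxo)] at hzx
    obtain ⟨hg1, hgw⟩ := grad_eq Ω hΩv u0 hu0.1 x (T0 x) g hx (hTΩ hxo) hg (by linarith)
    have e : f x - T0 x = (‖x - T0 x‖ - η) • g := by
      rw [hfx, sub_smul, hgw]; abel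
    by_cases hxA : x ∈ A
    · rw [indicator_of_mem hxA, e, norm_smul, Real.norm_of_nonneg (sub_nonneg.2 hxA.2)]
      have := mul_le_mul_of_nonneg_left hg1 (sub_nonneg.2 hxA.2)
      linarith
    · rw [indicator_of_notMem hxA, e, norm_smul]
      have h1 : ‖‖x - T0 x‖ - η‖ ≤ ‖x - T0 x‖ + η := by
        rw [Real.norm_eq_abs, abs_le]
        constructor <;> linarith [norm_nonneg (x - T0 x)]
      have := mul_le_mul h1 hg1 (norm_nonneg _) (by positivity)
      linarith
  have hIA : Integrable (A.indicator (fun _ => 2 * η)) μ := (integrable_const _).indicator hAm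
  have hI4 : Integrable (fun x => ‖x - T0 x‖ + η) μ := hI1.add (integrable_const η)
  have hW : W1 (μ.map f) ν ≤ ∫ x, ‖f x - T0 x‖ ∂μ := by
    refine csInf_le (W1_bdd _ ν) ⟨μ.map (fun x => (f x, T0 x)),
      Measure.isProbabilityMeasure_map (by fun_prop), ?_, ?_, ?_⟩
    · rw [Measure.map_map (by fun_prop) (by fun_prop)]
      rfl
    · rw [Measure.map_map (by fun_prop) (by fun_prop)]
      exact hTν
    · rw [integral_map (by fun_prop) (by fun_prop)]
  have hle : ∫ x, ‖f x - T0 x‖ ∂μ ≤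
      ∫ x, (‖x - T0 x‖ + η - A.indicator (fun _ => 2 * η) x) ∂μ :=
    integral_mono_of_nonneg (Filter.Eventually.of_forall fun x => norm_nonneg _)
      (hI4.sub hIA) hbound
  rw [integral_sub hI4 hIA, integral_add hI1 (integrable_const η), hTc,
    integral_indicator_const _ hAm] at hle
  simp only [integral_const, probReal_univ, smul_eq_mul, one_mul] at hle
  have : μ.real A = (μ A).toReal := rfl
  rw [this] at hle
  linarith
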